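/- arXiv:1907.08938 — 2 statements merged into one kernel-verified Lean document; each statement's English description precedes it below -/
import Mathlib

section
/- Let the mixing coefficients of the transformed code C_1(n,k,η,t) satisfy e_j ∉ {0, 1} for all j = 1,…,η. Suppose a set S of k node indices consists of the union of ℓ complete groups (where group j is {(j−1)t+1,…,jt} for j ≤ η) together with k − ℓ·t nodes chosen from the last n − η·t nodes, for some 0 ≤ ℓ ≤ η. Then the F-linear map sending the message array s ∈ F^{t×k} to the t·k symbols stored in the nodes of S is injective; i.e., any such collection of k nodes can decode all t·k data symbols, regardless of the specific values of e_1,…,e_η. -/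
/-- The codeword symbol `c_h = (s · G)_h` of the underlying `(n,k)` MDS code. -/
noncomputable def codewordSym {F : Type*} [Field F] {n k : ℕ}
    (G : Matrix (Fin k) (Fin n) F) (s : Fin k → F) (h : Fin n) : F :=
  ∑ i : Fin k, s i * G i h

/-- The symbol stored in row `ℓ` of node `m` of the transformed code `C₁(n,k,η,t)`:
for `m` among the first `η·t` nodes, with group index `j = ⌊m/t⌋`, in-group index
`i = m mod t` and companion node `⌊m/t⌋·t + ℓ`, the stored symbol is
`c^ℓ_m + c^i_{comp}` if `ℓ < i`, `c^i_m` if `ℓ = i`, and `c^ℓ_m + e_j·c^i_{comp}` if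
`ℓ > i`; the remaining nodes `m ≥ η·t` store the plain codeword symbols `c^ℓ_m`.
(Node and row indices are 0-based.) -/
noncomputable def storedC1 {F : Type*} [Field F] {n k : ℕ} (t η : ℕ) (ht : 0 < t)
    (hηt : η * t ≤ n) (G : Matrix (Fin k) (Fin n) F) (e : Fin η → F)
    (s : Fin t → Fin k → F) (m : Fin n) (ℓ : Fin t) : F :=
  if hm : (m : ℕ) < η * t then
    have hj : (m : ℕ) / t < η := by
      by_contra hcon
      push_neg at hcon
      have h1 : η * t ≤ (m : ℕ) / t * t := Nat.mul_le_mul_right t hcon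
      have h2 : (m : ℕ) / t * t ≤ (m : ℕ) := Nat.div_mul_le_self _ _
      omega
    have hcomp : (m : ℕ) / t * t + (ℓ : ℕ) < n := by
      have h3 : ((m : ℕ) / t + 1) * t ≤ η * t := Nat.mul_le_mul_right t hj
      have h4 : (m : ℕ) / t * t + t = ((m : ℕ) / t + 1) * t := by ring
      have h5 := ℓ.isLt
      omega
    have hi : (m : ℕ) % t < t := Nat.mod_lt _ ht
    let comp : Fin n := ⟨(m : ℕ) / t * t + (ℓ : ℕ), hcomp⟩
    if (ℓ : ℕ) < (m : ℕ) % t then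
      codewordSym G (s ℓ) m + codewordSym G (s ⟨(m : ℕ) % t, hi⟩) comp
    else if (ℓ : ℕ) = (m : ℕ) % t then
      codewordSym G (s ℓ) m
    else
      codewordSym G (s ℓ) m + e ⟨(m : ℕ) / t, hj⟩ * codewordSym G (s ⟨(m : ℕ) % t, hi⟩) comp
  else codewordSym G (s ℓ) m

/-- The `i`-th node of group `j` of the transformed code `C₁(n,k,η,t)`
(0-based: node `j·t + i`). -/
def groupNode {n : ℕ} (t η : ℕ) (hηt : η * t ≤ n) (j : Fin η) (i : Fin t) : Fin n :=
  ⟨(j : ℕ) * t + (i : ℕ), by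
    have h1 : ((j : ℕ) + 1) * t ≤ η * t := Nat.mul_le_mul_right t j.isLt
    have h2 : (j : ℕ) * t + t = ((j : ℕ) + 1) * t := by ring
    have h3 := i.isLt
    omega⟩

theorem storedC1_group {F : Type*} [Field F] {n k : ℕ} (t η : ℕ) (ht : 0 < t)
    (hηt : η * t ≤ n) (G : Matrix (Fin k) (Fin n) F) (e : Fin η → F)
    (s : Fin t → Fin k → F) (j : Fin η) (i ℓ : Fin t) :
    storedC1 t η ht hηt G e s (groupNode t η hηt j i) ℓ =
      if (ℓ : ℕ) < i then
        codewordSym G (s ℓ) (groupNode t η hηt j i) + codewordSym G (s i) (groupNode t η hηt j ℓ)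
      else if (ℓ : ℕ) = i then codewordSym G (s ℓ) (groupNode t η hηt j i)
      else codewordSym G (s ℓ) (groupNode t η hηt j i)
        + e j * codewordSym G (s i) (groupNode t η hηt j ℓ) := by
  have hm : ((groupNode t η hηt j i : Fin n) : ℕ) < η * t := by
    have h1 : ((j : ℕ) + 1) * t ≤ η * t := Nat.mul_le_mul_right t j.isLt
    have h2 : (j : ℕ) * t + t = ((j : ℕ) + 1) * t := by ring
    have h3 := i.isLt
    simp only [groupNode]
    omega
  have hdiv : ((groupNode t η hηt j i : Fin n) : ℕ) / t = j := by
    simp only [groupNode]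
    rw [Nat.add_comm, Nat.add_mul_div_right _ _ ht, Nat.div_eq_of_lt i.isLt, Nat.zero_add]
  have hmod : ((groupNode t η hηt j i : Fin n) : ℕ) % t = i := by
    simp only [groupNode]
    rw [Nat.add_comm, Nat.add_mul_mod_self_right, Nat.mod_eq_of_lt i.isLt]
  unfold storedC1
  rw [dif_pos hm]
  simp only [hdiv, hmod]
  rfl

/-- Lemma 3 of the paper: if a set `S` of `k` nodes of the transformed code
`C₁(n,k,η,t)` (with mixing coefficients `e_j ∉ {0,1}`) is a union of complete groups
together with nodes among the last `n − η·t` nodes — i.e. every group is either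
contained in `S` or disjoint from `S` — then the nodes of `S` can decode all `t·k`
data symbols: the linear map from the message array to the symbols stored in the
nodes of `S` is injective, whatever the specific values of `e_1,…,e_η`. -/
theorem stmt_8 {F : Type*} [Field F] (n k d : ℕ) (hk : 1 ≤ k) (hd1 : k + 1 ≤ d)
    (hd2 : d + 1 ≤ n) (t η : ℕ) (htdef : t = d - k + 1)
    (hηdef : η = (n - k - 1) / (d - k)) (ht : 0 < t) (hηt : η * t ≤ n)
    (G : Matrix (Fin k) (Fin n) F)
    (hMDS : ∀ cols : Fin k → Fin n, Function.Injective cols →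
      IsUnit (Matrix.of fun i j : Fin k => G i (cols j)).det)
    (e : Fin η → F) (he : ∀ j, e j ≠ 0 ∧ e j ≠ 1)
    (S : Finset (Fin n)) (hScard : S.card = k)
    (hSgroups : ∀ j : Fin η, (∀ i : Fin t, groupNode t η hηt j i ∈ S) ∨
      (∀ i : Fin t, groupNode t η hηt j i ∉ S)) :
    Function.Injective (fun s : Fin t → Fin k → F =>
      fun (p : {x : Fin n // x ∈ S}) (ℓ : Fin t) => storedC1 t η ht hηt G e s p.1 ℓ) := by
  intro s s' hss
  have hst : ∀ m ∈ S, ∀ ℓ, storedC1 t η ht hηt G e s m ℓ = storedC1 t η ht hηt G e s' m ℓ :=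
    fun m hm ℓ => congrFun (congrFun hss ⟨m, hm⟩) ℓ
  have key : ∀ m ∈ S, ∀ ℓ, codewordSym G (s ℓ) m = codewordSym G (s' ℓ) m := by
    intro m hm ℓ
    by_cases hlt : (m : ℕ) < η * t
    · have hj : (m : ℕ) / t < η := (Nat.div_lt_iff_lt_mul ht).2 hlt
      obtain ⟨j, i, rfl⟩ : ∃ j i, m = groupNode t η hηt j i := by
        refine ⟨⟨(m : ℕ) / t, hj⟩, ⟨(m : ℕ) % t, Nat.mod_lt _ ht⟩, ?_⟩
        apply Fin.ext
        simp only [groupNode]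
        exact (Nat.div_add_mod' _ _).symm
      have hall : ∀ i, groupNode t η hηt j i ∈ S := by
        rcases hSgroups j with h | h
        · exact h
        · exact absurd hm (h i)
      have h1 := hst _ (hall i) ℓ
      have h2 := hst _ (hall ℓ) i
      rw [storedC1_group, storedC1_group] at h1 h2
      have he1 : e j - 1 ≠ 0 := sub_ne_zero.2 (he j).2
      rcases lt_trichotomy (ℓ : ℕ) (i : ℕ) with h | h | h
      · rw [if_pos h, if_pos h] at h1
        rw [if_neg (by omega), if_neg (by omega), if_neg (by omega), if_neg (by omega)] at h2
        apply mul_left_cancel₀ he1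
        linear_combination h2 - h1
      · rw [if_neg (by omega), if_pos h, if_neg (by omega), if_pos h] at h1
        exact h1
      · rw [if_pos h, if_pos h] at h2
        rw [if_neg (by omega), if_neg (by omega), if_neg (by omega), if_neg (by omega)] at h1
        apply mul_left_cancel₀ he1
        linear_combination e j * h2 - h1
    · have h1 := hst m hm ℓ
      unfold storedC1 at h1
      rwa [dif_neg hlt, dif_neg hlt] at h1
  funext ℓ
  let cols : Fin k → Fin n := S.orderEmbOfFin hScard
  have hu := hMDS cols (S.orderEmbOfFin hScard).injective
  apply Matrix.vecMul_injective_of_isUnit ((Matrix.isUnit_iff_isUnit_det _).2 hu)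
  funext a
  exact key (cols a) (S.orderEmbOfFin_mem hScard a) ℓ
end

section
/- For the code C_2(n,k,η,t) with mixing coefficients satisfying e_j ∉ {0, 1} for all j = 1,…,2η, every one of the first t·η nodes retains optimal repair access: for each node index m with 1 ≤ m ≤ t·η, there exist d distinct helper node indices h_1,…,h_d ∈ {1,…,n}∖{m}, a choice of exactly t of the t² stored symbols of each helper node, and a reconstruction function φ : F^{d·t} → F^{t²}, such that for every choice of the t message arrays, applying φ to the d·t accessed symbols yields exactly the t² symbols stored in node m. In particular the total repair access is d·t = d·α/(d−k+1) symbols with α = t², matching the minimum repair bandwidth. -/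
/-- The symbol in block `ℓ`, position `r`, of node `m` of the code `C₂(n,k,η,t)`
(sub-packetization `t²`), built from `t` independent instances of `C₁(n,k,η,t)` (with
message arrays `S 0, …, S (t-1)` and mixing coefficients `e₁`) by additionally mixing
the second set of `η·t` nodes with the coefficients `e₂ = (e_{η+1},…,e_{2η})`:
writing `v^ℓ_h` for the content vector of node `h` in instance `ℓ`, node
`η·t + (j−1)·t + i` stores in block `ℓ` the vector `v^ℓ + v^i(comp)` if `ℓ < i`,
`v^i` if `ℓ = i`, and `v^ℓ + e_{η+j}·v^i(comp)` if `ℓ > i`, where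
`comp = η·t + (j−1)·t + ℓ`; every other node `h` stores `v^1_h,…,v^t_h`. -/
noncomputable def storedC2 {F : Type*} [Field F] {n k : ℕ} (t η : ℕ) (ht : 0 < t)
    (hηt : η * t ≤ n) (h2ηt : 2 * (η * t) ≤ n) (G : Matrix (Fin k) (Fin n) F)
    (e₁ e₂ : Fin η → F) (S : Fin t → Fin t → Fin k → F) (m : Fin n) (ℓ r : Fin t) : F :=
  let v : Fin t → Fin n → Fin t → F :=
    fun inst h => storedC1 t η ht hηt G e₁ (S inst) h
  if hm : η * t ≤ (m : ℕ) ∧ (m : ℕ) < 2 * (η * t) then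
    have hpos : (m : ℕ) - η * t < η * t := by omega
    have hj : ((m : ℕ) - η * t) / t < η := by
      by_contra hcon
      push_neg at hcon
      have h1 : η * t ≤ ((m : ℕ) - η * t) / t * t := Nat.mul_le_mul_right t hcon
      have h2 : ((m : ℕ) - η * t) / t * t ≤ (m : ℕ) - η * t := Nat.div_mul_le_self _ _
      omega
    have hcomp : η * t + ((m : ℕ) - η * t) / t * t + (ℓ : ℕ) < n := by
      have h3 : (((m : ℕ) - η * t) / t + 1) * t ≤ η * t := Nat.mul_le_mul_right t hj
      have h4 : ((m : ℕ) - η * t) / t * t + t = (((m : ℕ) - η * t) / t + 1) * t := by ring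
      have h5 := ℓ.isLt
      omega
    have hi : ((m : ℕ) - η * t) % t < t := Nat.mod_lt _ ht
    let comp : Fin n := ⟨η * t + ((m : ℕ) - η * t) / t * t + (ℓ : ℕ), hcomp⟩
    if (ℓ : ℕ) < ((m : ℕ) - η * t) % t then
      v ℓ m r + v ⟨((m : ℕ) - η * t) % t, hi⟩ comp r
    else if (ℓ : ℕ) = ((m : ℕ) - η * t) % t then
      v ℓ m r
    else
      v ℓ m r + e₂ ⟨((m : ℕ) - η * t) / t, hj⟩ * v ⟨((m : ℕ) - η * t) % t, hi⟩ comp r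
  else v ℓ m r

lemma aux_div (t j p : ℕ) (hp : p < t) : (j * t + p) / t = j := by
  rw [mul_comm, Nat.mul_add_div (by omega), Nat.div_eq_of_lt hp, add_zero]

lemma aux_mod (t j p : ℕ) (hp : p < t) : (j * t + p) % t = p := by
  rw [mul_comm, Nat.mul_add_mod, Nat.mod_eq_of_lt hp]

section
variable {F : Type*} [Field F] {n k : ℕ} (t η : ℕ) (ht : 0 < t)
    (hηt : η * t ≤ n) (h2ηt : 2 * (η * t) ≤ n) (G : Matrix (Fin k) (Fin n) F)

lemma C1_high (e : Fin η → F) (s : Fin t → Fin k → F) (m : Fin n) (ℓ : Fin t)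
    (hm : η * t ≤ (m : ℕ)) :
    storedC1 t η ht hηt G e s m ℓ = codewordSym G (s ℓ) m := by
  unfold storedC1
  rw [dif_neg (by omega)]

lemma C1_diag (e : Fin η → F) (s : Fin t → Fin k → F) (m : Fin n) (ℓ : Fin t) (j : ℕ)
    (hm : (m : ℕ) < η * t) (hmj : (m : ℕ) = j * t + ℓ) :
    storedC1 t η ht hηt G e s m ℓ = codewordSym G (s ℓ) m := by
  have h2 : (m : ℕ) % t = ℓ := by rw [hmj, aux_mod _ _ _ ℓ.2]
  unfold storedC1
  rw [dif_pos hm]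
  simp [h2]

lemma C1_off (e : Fin η → F) (he : ∀ j, e j ≠ 0) (m c : Fin n) (p ℓ : Fin t) (j : ℕ)
    (hm : (m : ℕ) < η * t) (hmj : (m : ℕ) = j * t + p) (hc : (c : ℕ) = j * t + ℓ)
    (hne : ℓ ≠ p) :
    ∃ x : F, x ≠ 0 ∧ ∀ s : Fin t → Fin k → F, storedC1 t η ht hηt G e s m ℓ =
      codewordSym G (s ℓ) m + x * codewordSym G (s p) c := by
  have h1 : (m : ℕ) / t = j := by rw [hmj, aux_div _ _ _ p.2]
  have h2 : (m : ℕ) % t = p := by rw [hmj, aux_mod _ _ _ p.2]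
  have hj : (m : ℕ) / t < η := by
    rw [Nat.div_lt_iff_lt_mul ht]; exact hm
  have hne' : (ℓ : ℕ) ≠ p := fun h => hne (Fin.ext h)
  have hc' : ∀ h', (⟨j * t + ℓ, h'⟩ : Fin n) = c := fun _ => Fin.ext hc.symm
  refine ⟨if (ℓ : ℕ) < p then 1 else e ⟨(m : ℕ) / t, hj⟩, ?_, ?_⟩
  · split_ifs
    · exact one_ne_zero
    · exact he _
  · intro s
    unfold storedC1
    rw [dif_pos hm]
    by_cases h : (ℓ : ℕ) < p
    · simp [h2, h, h1, hc']
    · simp [h2, h, h1, hne', hc']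

lemma C2_out (e₁ e₂ : Fin η → F) (S : Fin t → Fin t → Fin k → F) (m : Fin n) (ℓ r : Fin t)
    (hm : ¬ (η * t ≤ (m : ℕ) ∧ (m : ℕ) < 2 * (η * t))) :
    storedC2 t η ht hηt h2ηt G e₁ e₂ S m ℓ r = storedC1 t η ht hηt G e₁ (S ℓ) m r := by
  unfold storedC2
  rw [dif_neg hm]

lemma C2_diag (e₁ e₂ : Fin η → F) (S : Fin t → Fin t → Fin k → F) (m : Fin n) (ℓ r : Fin t)
    (j : ℕ) (hmj : (m : ℕ) = η * t + (j * t + ℓ)) :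
    storedC2 t η ht hηt h2ηt G e₁ e₂ S m ℓ r = codewordSym G (S ℓ r) m := by
  have h2 : ((m : ℕ) - η * t) % t = ℓ := by rw [hmj, Nat.add_sub_cancel_left, aux_mod _ _ _ ℓ.2]
  by_cases hm : (η * t ≤ (m : ℕ) ∧ (m : ℕ) < 2 * (η * t))
  · unfold storedC2
    rw [dif_pos hm]
    simp [h2]
    rw [C1_high]
    exact hm.1
  · rw [C2_out _ _ _ _ _ _ _ _ _ _ _ _ hm, C1_high]
    omega

lemma C2_pair (e₁ e₂ : Fin η → F) (he : ∀ j, e₂ j ≠ 0 ∧ e₂ j ≠ 1) (a b : Fin n) (p q : Fin t)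
    (j : ℕ) (hj : j < η) (ha : (a : ℕ) = η * t + (j * t + p))
    (hb : (b : ℕ) = η * t + (j * t + q)) (hpq : p < q) :
    ∃ x : F, x ≠ 0 ∧ x ≠ 1 ∧ ∀ (S : Fin t → Fin t → Fin k → F) (r : Fin t),
      storedC2 t η ht hηt h2ηt G e₁ e₂ S a q r
        = codewordSym G (S q r) a + x * codewordSym G (S p r) b ∧
      storedC2 t η ht hηt h2ηt G e₁ e₂ S b p r
        = codewordSym G (S p r) b + codewordSym G (S q r) a := by
  have h3 : (j + 1) * t ≤ η * t := Nat.mul_le_mul_right t hj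
  have h4 : (j + 1) * t = j * t + t := by ring
  have hp := p.2
  have hq := q.2
  have a1 : ((a : ℕ) - η * t) / t = j := by rw [ha, Nat.add_sub_cancel_left, aux_div _ _ _ p.2]
  have a2 : ((a : ℕ) - η * t) % t = p := by rw [ha, Nat.add_sub_cancel_left, aux_mod _ _ _ p.2]
  have b1 : ((b : ℕ) - η * t) / t = j := by rw [hb, Nat.add_sub_cancel_left, aux_div _ _ _ q.2]
  have b2 : ((b : ℕ) - η * t) % t = q := by rw [hb, Nat.add_sub_cancel_left, aux_mod _ _ _ q.2]
  have hpq' : (p : ℕ) < q := hpq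
  have n1 : ¬ (q : ℕ) < p := by omega
  have n2 : (q : ℕ) ≠ p := by omega
  refine ⟨e₂ ⟨j, hj⟩, (he _).1, (he _).2, fun S r => ⟨?_, ?_⟩⟩
  · have hc : ∀ h', (⟨η * t + j * t + q, h'⟩ : Fin n) = b :=
      fun _ => Fin.ext (by simp only [hb, add_assoc])
    unfold storedC2
    rw [dif_pos (by omega)]
    simp only [a1, a2, n1, n2, if_false, Fin.eta, hc]
    rw [C1_high, C1_high]
    · omega
    · omega
  · have hc : ∀ h', (⟨η * t + j * t + p, h'⟩ : Fin n) = a :=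
      fun _ => Fin.ext (by simp only [ha, add_assoc])
    unfold storedC2
    rw [dif_pos (by omega)]
    simp only [b1, b2, hpq', if_true, Fin.eta, hc]
    rw [C1_high, C1_high]
    · omega
    · omega

lemma mds_inj (hMDS : ∀ cols : Fin k → Fin n, Function.Injective cols →
      IsUnit (Matrix.of fun i j : Fin k => G i (cols j)).det)
    (K : Finset (Fin n)) (hK : K.card = k) (s s' : Fin k → F)
    (h : ∀ a ∈ K, codewordSym G s a = codewordSym G s' a) : s = s' := by
  have hu := hMDS (K.orderEmbOfFin hK) (K.orderEmbOfFin hK).injective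
  have hu2 := (Matrix.isUnit_iff_isUnit_det _).2 hu
  apply Matrix.vecMul_injective_iff_isUnit.2 hu2
  ext j
  have := h _ (K.orderEmbOfFin_mem hK j)
  simpa [Matrix.vecMul, dotProduct, codewordSym] using this

end

lemma exists_upper {α : Type*} [LinearOrder α] (A : Finset α) (k : ℕ) (hk : k ≤ A.card) :
    ∃ K ⊆ A, K.card = k ∧ ∀ x ∈ K, ∀ y ∈ A, x < y → y ∈ K := by
  induction k with
  | zero => exact ⟨∅, by simp, by simp, by simp⟩
  | succ k ih =>
    obtain ⟨K, hKA, hc, hup⟩ := ih (by omega)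
    have hne : (A \ K).Nonempty := by
      rw [← Finset.card_pos, Finset.card_sdiff_of_subset hKA]; omega
    have hmem := Finset.max'_mem _ hne
    rw [Finset.mem_sdiff] at hmem
    refine ⟨insert ((A \ K).max' hne) K, ?_, ?_, ?_⟩
    · exact Finset.insert_subset hmem.1 hKA
    · rw [Finset.card_insert_of_notMem hmem.2, hc]
    · intro x hx y hy hxy
      rw [Finset.mem_insert] at hx ⊢
      rcases hx with rfl | hx
      · right
        by_contra hyK
        have := Finset.le_max' (A \ K) y (Finset.mem_sdiff.2 ⟨hy, hyK⟩)
        exact absurd hxy (not_lt.2 this)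
      · exact Or.inr (hup x hx y hy hxy)

lemma avail_card (n t η i : ℕ) (hit : i < t) (hηt : η * t ≤ n) :
    n - η * t + η ≤
      (Finset.univ.filter fun h : Fin n => η * t ≤ (h : ℕ) ∨ (h : ℕ) % t = i).card := by
  have hlt : ∀ j : Fin η, (j : ℕ) * t + i < η * t := by
    intro j
    have h3 : ((j : ℕ) + 1) * t ≤ η * t := Nat.mul_le_mul_right t j.2
    have h4 : ((j : ℕ) + 1) * t = j * t + t := by ring
    omega
  let f : Fin (n - η * t) ⊕ Fin η → Fin n :=
    Sum.elim (fun a => ⟨η * t + a, by have := a.2; omega⟩)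
      (fun j => ⟨j * t + i, lt_of_lt_of_le (hlt j) hηt⟩)
  have hf : Function.Injective f := by
    rintro (a | a) (b | b) hab
    · simp [f] at hab; simp [Fin.ext_iff, hab]
    · simp [f] at hab; have := hlt b; omega
    · simp [f] at hab; have := hlt a; omega
    · simp [f] at hab
      rcases hab with hab | hab
      · simp [Fin.ext_iff, hab]
      · omega
  have := Finset.card_le_card_of_injOn (s := (Finset.univ : Finset (Fin (n - η * t) ⊕ Fin η)))
    (t := Finset.univ.filter fun h : Fin n => η * t ≤ (h : ℕ) ∨ (h : ℕ) % t = i) f ?_ hf.injOn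
  · simpa using this
  · rintro (a | a) _
    · simp [f]
    · simp [f, Nat.mod_eq_of_lt hit]

lemma exists_factor {α β γ : Type*} [Nonempty γ] (f : α → β) (g : α → γ)
    (h : ∀ x y, f x = f y → g x = g y) : ∃ φ : β → γ, ∀ x, φ (f x) = g x := by
  classical
  obtain ⟨c⟩ := ‹Nonempty γ›
  exact ⟨Function.extend f g (fun _ => c),
    fun x => Function.FactorsThrough.extend_apply (fun a b hab => h a b hab) _ x⟩

/-- Theorem 5 of the paper: in the code `C₂(n,k,η,t)` (all mixing coefficients outside
`{0,1}`), each of the first `t·η` nodes retains optimal repair access: there are `d`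
distinct helper nodes (none equal to the failed node), a choice of exactly `t` of the
`t²` stored symbols of each helper node, and a reconstruction function recovering, for
every message, the `t²` symbols of the failed node from the `d·t` accessed symbols.
The total repair access `d·t = d·α/(d−k+1)` with `α = t²` matches the minimum repair
bandwidth. -/
theorem stmt_11 {F : Type*} [Field F] (n k d : ℕ) (hk : 1 ≤ k) (hd1 : k + 1 ≤ d)
    (hd2 : d + 1 ≤ n) (t η : ℕ) (htdef : t = d - k + 1)
    (hηdef : η = (n - k - 1) / (d - k)) (ht : 0 < t) (hηt : η * t ≤ n)
    (h2ηt : 2 * (η * t) ≤ n)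
    (G : Matrix (Fin k) (Fin n) F)
    (hMDS : ∀ cols : Fin k → Fin n, Function.Injective cols →
      IsUnit (Matrix.of fun i j : Fin k => G i (cols j)).det)
    (e₁ e₂ : Fin η → F) (he₁ : ∀ j, e₁ j ≠ 0 ∧ e₁ j ≠ 1) (he₂ : ∀ j, e₂ j ≠ 0 ∧ e₂ j ≠ 1)
    (m : Fin n) (hm : (m : ℕ) < t * η) :
    ∃ h : Fin d → Fin n, Function.Injective h ∧ (∀ a, h a ≠ m) ∧
      ∃ sel : Fin d → Fin t → Fin t × Fin t, (∀ a, Function.Injective (sel a)) ∧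
        ∃ φ : (Fin d → Fin t → F) → Fin t → Fin t → F,
          ∀ S : Fin t → Fin t → Fin k → F,
            φ (fun a r => storedC2 t η ht hηt h2ηt G e₁ e₂ S (h a)
                (sel a r).1 (sel a r).2) =
              fun ℓ r => storedC2 t η ht hηt h2ηt G e₁ e₂ S m ℓ r := by
  have ht2 : 2 ≤ t := by omega
  have hmη : (m : ℕ) < η * t := by rw [mul_comm]; exact hm
  have hηpos : η * (d - k) ≤ n - k - 1 := by rw [hηdef]; exact Nat.div_mul_le_self _ _
  obtain ⟨j0, i, hmj⟩ : ∃ (j0 : ℕ) (i : Fin t), (m : ℕ) = j0 * t + i :=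
    ⟨(m : ℕ) / t, ⟨(m : ℕ) % t, Nat.mod_lt _ ht⟩, by
      simp only []; rw [mul_comm]; exact (Nat.div_add_mod _ _).symm⟩
  have hmi : (m : ℕ) % t = i := by rw [hmj, aux_mod _ _ _ i.2]
  have hmd : (m : ℕ) / t = j0 := by rw [hmj, aux_div _ _ _ i.2]
  have hj0 : j0 < η := by rw [← hmd, Nat.div_lt_iff_lt_mul ht]; exact hmη
  have hj0t : j0 * t + t ≤ η * t := by
    have h3 : (j0 + 1) * t ≤ η * t := Nat.mul_le_mul_right t hj0
    have h4 : (j0 + 1) * t = j0 * t + t := by ring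
    omega
  set A : Finset (Fin n) :=
    (Finset.univ.filter fun h : Fin n => η * t ≤ (h : ℕ) ∨ (h : ℕ) % t = i).erase m with hA
  have hAcard : k ≤ A.card := by
    have h1 := avail_card n t η i i.2 hηt
    have h2 : m ∈ (Finset.univ.filter fun h : Fin n => η * t ≤ (h : ℕ) ∨ (h : ℕ) % t = i) := by
      simp [hmi]
    rw [hA, Finset.card_erase_of_mem h2]
    have h3 : η * t = η * (d - k) + η := by rw [htdef]; ring
    omega
  obtain ⟨K, hKA, hKc, hup⟩ := exists_upper A k hAcard
  have hlt : ∀ q : Fin t, j0 * t + (q : ℕ) < n := fun q => by have := q.2; omega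
  let g : Fin t → Fin n := fun q => ⟨j0 * t + q, hlt q⟩
  have hg : Function.Injective g := by
    intro a b hab
    simp [g] at hab
    exact Fin.ext (by omega)
  have hgi : g i = m := Fin.ext hmj.symm
  set B : Finset (Fin n) := (Finset.univ.erase i).image g with hB
  have hBc : B.card = t - 1 := by
    rw [hB, Finset.card_image_of_injective _ hg, Finset.card_erase_of_mem (Finset.mem_univ _)]
    simp
  have hdisj : Disjoint K B := by
    rw [Finset.disjoint_left]
    intro x hx hxB
    have hxA := hKA hx
    simp only [hB, Finset.mem_image, Finset.mem_erase] at hxB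
    obtain ⟨q, ⟨hqi, -⟩, rfl⟩ := hxB
    simp only [hA, Finset.mem_erase, Finset.mem_filter, g] at hxA
    rw [aux_mod _ _ _ q.2] at hxA
    rcases hxA.2.2 with h | h
    · have := q.2; omega
    · exact hqi (Fin.ext h)
  have hHc : (K ∪ B).card = d := by
    rw [Finset.card_union_of_disjoint hdisj, hKc, hBc]; omega
  refine ⟨(K ∪ B).orderEmbOfFin hHc, ((K ∪ B).orderEmbOfFin hHc).injective, ?_, ?_⟩
  · intro a ha
    have h1 := (K ∪ B).orderEmbOfFin_mem hHc a
    rw [ha, Finset.mem_union] at h1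
    rcases h1 with h1 | h1
    · have := hKA h1
      simp [hA] at this
    · simp only [hB, Finset.mem_image, Finset.mem_erase] at h1
      obtain ⟨q, ⟨hqi, -⟩, hq⟩ := h1
      exact hqi (hg (hq.trans hgi.symm))
  refine ⟨fun _ r => (r, i), fun _ a b hab => by simpa using hab, ?_⟩
  refine exists_factor (fun (S : Fin t → Fin t → Fin k → F) (a : Fin d) (r : Fin t) =>
    storedC2 t η ht hηt h2ηt G e₁ e₂ S ((K ∪ B).orderEmbOfFin hHc a) r i)
    (fun S ℓ r => storedC2 t η ht hηt h2ηt G e₁ e₂ S m ℓ r) ?_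
  intro S S' hSS
  have hacc : ∀ x ∈ K ∪ B, ∀ ℓ, storedC2 t η ht hηt h2ηt G e₁ e₂ S x ℓ i =
      storedC2 t η ht hηt h2ηt G e₁ e₂ S' x ℓ i := by
    intro x hx ℓ
    have : x ∈ Set.range ((K ∪ B).orderEmbOfFin hHc) := by
      rw [Finset.range_orderEmbOfFin]; exact hx
    obtain ⟨a, rfl⟩ := this
    exact congrFun (congrFun hSS a) ℓ
  have haccK : ∀ x ∈ K, ∀ ℓ, storedC2 t η ht hηt h2ηt G e₁ e₂ S x ℓ i =
      storedC2 t η ht hηt h2ηt G e₁ e₂ S' x ℓ i := fun x hx =>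
    hacc x (Finset.mem_union_left _ hx)
  clear hSS
  have hmid : ∀ x : Fin n, (η * t ≤ (x : ℕ) ∧ (x : ℕ) < 2 * (η * t)) →
      ∃ (j : ℕ) (p : Fin t), j < η ∧ (x : ℕ) = η * t + (j * t + p) := by
    intro x hx
    refine ⟨((x : ℕ) - η * t) / t, ⟨((x : ℕ) - η * t) % t, Nat.mod_lt _ ht⟩, ?_, ?_⟩
    · rw [Nat.div_lt_iff_lt_mul ht]; omega
    · have := Nat.div_add_mod ((x : ℕ) - η * t) t
      rw [mul_comm] at this
      simp only []
      omega
  have hjt : ∀ j, j < η → j * t + t ≤ η * t := by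
    intro j hj
    have h3 : (j + 1) * t ≤ η * t := Nat.mul_le_mul_right t hj
    have h4 : (j + 1) * t = j * t + t := by ring
    omega
  have hmemA : ∀ x : Fin n, η * t ≤ (x : ℕ) → x ∈ A := by
    intro x hx
    simp only [hA, Finset.mem_erase, Finset.mem_filter, Finset.mem_univ, true_and]
    refine ⟨fun h => ?_, Or.inl hx⟩
    rw [h] at hx; omega
  -- decoupling
  have hdec : ∀ x ∈ K, ∀ ℓ : Fin t,
      (∀ (j : ℕ) (p : Fin t), j < η → (x : ℕ) = η * t + (j * t + p) → p ≠ ℓ →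
        ∃ y ∈ K, (y : ℕ) = η * t + (j * t + ℓ)) →
      codewordSym G (S ℓ i) x = codewordSym G (S' ℓ i) x := by
    intro x hx ℓ hcomp
    have hxs := haccK x hx ℓ
    by_cases hxm : η * t ≤ (x : ℕ) ∧ (x : ℕ) < 2 * (η * t)
    · obtain ⟨j, p, hj, hxj⟩ := hmid x hxm
      by_cases hp : p = ℓ
      · subst hp
        rwa [C2_diag _ _ _ _ _ _ _ _ _ _ _ _ j hxj, C2_diag _ _ _ _ _ _ _ _ _ _ _ _ j hxj]
          at hxs
      · obtain ⟨y, hy, hyj⟩ := hcomp j p hj hxj hp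
        have hys := haccK y hy p
        rcases lt_or_gt_of_ne hp with hlt' | hlt'
        · obtain ⟨c, hc0, hc1, hc⟩ :=
            C2_pair t η ht hηt h2ηt G e₁ e₂ he₂ x y p ℓ j hj hxj hyj hlt'
          rw [(hc S i).1, (hc S' i).1] at hxs
          rw [(hc S i).2, (hc S' i).2] at hys
          have h1 : (1 - c) ≠ 0 := sub_ne_zero.2 (Ne.symm hc1)
          apply mul_left_cancel₀ h1
          linear_combination hxs - c * hys
        · obtain ⟨c, hc0, hc1, hc⟩ :=
            C2_pair t η ht hηt h2ηt G e₁ e₂ he₂ y x ℓ p j hj hyj hxj hlt'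
          rw [(hc S i).2, (hc S' i).2] at hxs
          rw [(hc S i).1, (hc S' i).1] at hys
          have h1 : (1 - c) ≠ 0 := sub_ne_zero.2 (Ne.symm hc1)
          apply mul_left_cancel₀ h1
          linear_combination hxs - hys
    · rw [C2_out _ _ _ _ _ _ _ _ _ _ _ _ hxm, C2_out _ _ _ _ _ _ _ _ _ _ _ _ hxm] at hxs
      by_cases hxh : η * t ≤ (x : ℕ)
      · rwa [C1_high _ _ _ _ _ _ _ _ _ hxh, C1_high _ _ _ _ _ _ _ _ _ hxh] at hxs
      · have hxA := hKA hx
        simp only [hA, Finset.mem_erase, Finset.mem_filter, Finset.mem_univ, true_and] at hxA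
        have hxi : (x : ℕ) = (x : ℕ) / t * t + i := by
          have h1 := Nat.div_add_mod (x : ℕ) t
          rw [mul_comm] at h1
          have h2 : (x : ℕ) % t = i := by tauto
          omega
        rwa [C1_diag _ _ _ _ _ _ _ _ _ _ (by omega) hxi,
          C1_diag _ _ _ _ _ _ _ _ _ _ (by omega) hxi] at hxs
  -- all codeword symbols on `K`
  have hall : ∀ ℓ : Fin t, ∀ x ∈ K, codewordSym G (S ℓ i) x = codewordSym G (S' ℓ i) x := by
    intro ℓ x hx
    by_cases hcomp : ∀ (j : ℕ) (p : Fin t), j < η → (x : ℕ) = η * t + (j * t + p) → p ≠ ℓ →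
        ∃ y ∈ K, (y : ℕ) = η * t + (j * t + ℓ)
    · exact hdec x hx ℓ hcomp
    · push Not at hcomp
      obtain ⟨j, p, hj, hxj, hpl, hno⟩ := hcomp
      have hjtj := hjt j hj
      have hℓ := ℓ.2
      have hp := p.2
      let y : Fin n := ⟨η * t + (j * t + ℓ), by omega⟩
      have hyj : (y : ℕ) = η * t + (j * t + ℓ) := rfl
      have hyK : y ∉ K := fun h => hno y h hyj
      have hyA : y ∈ A := hmemA y (by omega)
      have hlp : ℓ < p := by
        rcases lt_or_gt_of_ne hpl with h | h
        · exact absurd (hup x hx y hyA (by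
            rw [Fin.lt_def] at h ⊢; omega)) hyK
        · exact h
      have hSp : S p i = S' p i := by
        apply mds_inj G hMDS K hKc
        intro z hz
        apply hdec z hz
        intro j2 p2 hj2 hzj hp2
        have hjtj2 := hjt j2 hj2
        have hp2t := p2.2
        let w : Fin n := ⟨η * t + (j2 * t + p), by omega⟩
        have hwj : (w : ℕ) = η * t + (j2 * t + p) := rfl
        have hwA : w ∈ A := hmemA w (by omega)
        refine ⟨w, ?_, hwj⟩
        rcases lt_trichotomy j2 j with h | h | h
        · exfalso
          apply hyK
          apply hup z hz y hyA
          have h3 : (j2 + 1) * t ≤ j * t := Nat.mul_le_mul_right t h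
          have h4 : (j2 + 1) * t = j2 * t + t := by ring
          rw [Fin.lt_def]; omega
        · subst h
          have : w = x := Fin.ext (by rw [hwj, hxj])
          rw [this]; exact hx
        · apply hup x hx w hwA
          have h3 : (j + 1) * t ≤ j2 * t := Nat.mul_le_mul_right t h
          have h4 : (j + 1) * t = j * t + t := by ring
          rw [Fin.lt_def]; omega
      obtain ⟨c, hc0, hc1, hc⟩ :=
        C2_pair t η ht hηt h2ηt G e₁ e₂ he₂ y x ℓ p j hj hyj hxj hlp
      have hxs := haccK x hx ℓ
      rw [(hc S i).2, (hc S' i).2, hSp] at hxs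
      exact add_right_cancel hxs
  have hSi : ∀ ℓ, S ℓ i = S' ℓ i := fun ℓ => mds_inj G hMDS K hKc _ _ (hall ℓ)
  have he₁' : ∀ j, e₁ j ≠ 0 := fun j => (he₁ j).1
  have hmm : ∀ ℓ r, codewordSym G (S ℓ r) m = codewordSym G (S' ℓ r) m := by
    intro ℓ r
    by_cases hr : r = i
    · rw [hr, hSi]
    · have hgr : g r ∈ B := Finset.mem_image_of_mem _ (by simp [hr])
      have hgv : (g r : ℕ) = j0 * t + r := rfl
      have hrt := r.2
      have h1 := hacc (g r) (Finset.mem_union_right _ hgr) ℓ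
      rw [C2_out _ _ _ _ _ _ _ _ _ _ _ _ (by omega),
        C2_out _ _ _ _ _ _ _ _ _ _ _ _ (by omega)] at h1
      obtain ⟨x, hx0, hx⟩ := C1_off t η ht hηt G e₁ he₁' (g r) m r i j0 (by omega) hgv hmj
        (Ne.symm hr)
      rw [hx, hx, hSi] at h1
      exact mul_left_cancel₀ hx0 (add_left_cancel h1)
  funext ℓ r
  rw [C2_out _ _ _ _ _ _ _ _ _ _ _ _ (by omega), C2_out _ _ _ _ _ _ _ _ _ _ _ _ (by omega)]
  by_cases hr : r = i
  · subst hr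
    rw [C1_diag _ _ _ _ _ _ _ _ _ _ hmη hmj, C1_diag _ _ _ _ _ _ _ _ _ _ hmη hmj, hmm]
  · obtain ⟨x, hx0, hx⟩ := C1_off t η ht hηt G e₁ he₁' m (g r) i r j0 hmη hmj rfl hr
    rw [hx, hx, hSi, hmm]
end
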